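/- arXiv:1211.2395 — 4 statements merged into one kernel-verified Lean document; each statement's English description precedes it below -/
import Mathlib

section
/- Normalized Wronskian of the series solutions: with C₁, C₂ as defined (in particular c₁₀c₂₀ = (2ν)^{−1}), for every λ ∈ ℂ and every x ≠ a one has C₁(x,λ)C₂′(x,λ) − C₁′(x,λ)C₂(x,λ) = 1, where ′ denotes the derivative with respect to x. -/
/-!
In the variable `w = λ (x - a) ^ 2` each solution is `(x - a) ^ μ * F w` with `F` entire, and the
indicial equation `μ (μ - 1) = ν₀` turns the recurrence of the coefficients into
`w F'' + α F' = -F / 4` with `α = μ + 1 / 2`. The exponents of the two solutions add up to `1`, so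
their Wronskian in `x` equals `2 w (F G' - F' G) + (μ₂ - μ₁) F G`. This entire function of `w` has
derivative zero, hence equals its value `(μ₂ - μ₁) c₁₀ c₂₀` at the singular point `w = 0`.
-/

open Complex Set Filter MeasureTheory

noncomputable section

/-- The coefficients `c_{jk} = (−1)^k c_{j0} (∏_{s=1}^k ((2s+μ_j)(2s+μ_j−1) − ν₀))⁻¹`. -/
def coefC (ν₀ μ c0 : ℂ) (k : ℕ) : ℂ :=
  (-1) ^ k * c0 / ∏ s ∈ Finset.range k,
    ((2 * ((s : ℂ) + 1) + μ) * (2 * ((s : ℂ) + 1) + μ - 1) - ν₀)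

/-- `C_j(x,λ) = (x−a)^{μ_j} Σ_{k≥0} c_{jk} (ρ(x−a))^{2k}` (written in terms of
`λ = ρ²`), with the branch `z^μ = exp(μ(ln|z| + i arg z))`, `arg z ∈ (−π,π]`. -/
def Cfun (a : ℝ) (ν₀ μ c0 : ℂ) (x : ℝ) (lam : ℂ) : ℂ :=
  ((x : ℂ) - (a : ℂ)) ^ μ *
    ∑' k : ℕ, coefC ν₀ μ c0 k * (lam * ((x : ℂ) - (a : ℂ)) ^ 2) ^ k

section Wronskian

variable {𝕜 : Type*} [NontriviallyNormedField 𝕜] {A : Type*} [NormedCommRing A] [NormedAlgebra 𝕜 A]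

/-- The Wronskian `f g' - f' g` of two functions of one variable, in terms of `deriv`; it is
meaningful only where both functions are differentiable. -/
def wronskian (f g : 𝕜 → A) (x : 𝕜) : A :=
  f x * deriv g x - deriv f x * g x

theorem wronskian_mul_mul {p q f g : 𝕜 → A} {x : 𝕜}
    (hp : DifferentiableAt 𝕜 p x) (hq : DifferentiableAt 𝕜 q x)
    (hf : DifferentiableAt 𝕜 f x) (hg : DifferentiableAt 𝕜 g x) :
    wronskian (fun t => p t * f t) (fun t => q t * g t) x =
      p x * q x * wronskian f g x + wronskian p q x * (f x * g x) := by
  simp only [wronskian, deriv_fun_mul hp hf, deriv_fun_mul hq hg]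
  ring

theorem wronskian_comp {K : Type*} [NontriviallyNormedField K] [NormedAlgebra 𝕜 K]
    {f g : K → K} {h : 𝕜 → K} {h' : K} {x : 𝕜}
    (hf : DifferentiableAt K f (h x)) (hg : DifferentiableAt K g (h x))
    (hh : HasDerivAt h h' x) :
    wronskian (fun t => f (h t)) (fun t => g (h t)) x = h' * wronskian f g (h x) := by
  have hfh : deriv (fun t => f (h t)) x = deriv f (h x) * h' := (hf.hasDerivAt.comp x hh).deriv
  have hgh : deriv (fun t => g (h t)) x = deriv g (h x) * h' := (hg.hasDerivAt.comp x hh).deriv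
  rw [wronskian, wronskian, hfh, hgh]
  ring

end Wronskian

theorem hasDerivAt_ofReal_sub_cpow_const {a x : ℝ} (hx : x ≠ a) (μ : ℂ) :
    HasDerivAt (fun t : ℝ => ((t : ℂ) - a) ^ μ) (μ * ((x : ℂ) - a) ^ (μ - 1)) x := by
  rcases eq_or_ne μ 0 with rfl | hμ
  · simpa using hasDerivAt_const x (1 : ℂ)
  · simpa using (hasDerivAt_ofReal_cpow_const (sub_ne_zero.mpr hx) hμ).comp_sub_const x a

theorem wronskian_ofReal_sub_cpow {a x : ℝ} (hx : x ≠ a) (μ₁ μ₂ : ℂ) :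
    wronskian (fun t : ℝ => ((t : ℂ) - a) ^ μ₁) (fun t : ℝ => ((t : ℂ) - a) ^ μ₂) x =
      (μ₂ - μ₁) * ((x : ℂ) - a) ^ (μ₁ + μ₂ - 1) := by
  have hz : (x : ℂ) - a ≠ 0 := sub_ne_zero.mpr (by exact_mod_cast hx)
  have hleft : ((x : ℂ) - a) ^ μ₁ * ((x : ℂ) - a) ^ (μ₂ - 1) =
      ((x : ℂ) - a) ^ (μ₁ + μ₂ - 1) := by
    rw [← cpow_add _ _ hz, add_sub_assoc]
  have hright : ((x : ℂ) - a) ^ (μ₁ - 1) * ((x : ℂ) - a) ^ μ₂ =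
      ((x : ℂ) - a) ^ (μ₁ + μ₂ - 1) := by
    rw [← cpow_add _ _ hz, sub_add_eq_add_sub]
  rw [wronskian, (hasDerivAt_ofReal_sub_cpow_const hx μ₁).deriv,
    (hasDerivAt_ofReal_sub_cpow_const hx μ₂).deriv]
  linear_combination μ₂ * hleft - μ₁ * hright

theorem wronskian_cpow_mul_comp_sq {a x : ℝ} (hx : x ≠ a) {μ₁ μ₂ : ℂ} (hμ : μ₁ + μ₂ = 1)
    {F G : ℂ → ℂ} {lam : ℂ} (hF : DifferentiableAt ℂ F (lam * ((x : ℂ) - a) ^ 2))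
    (hG : DifferentiableAt ℂ G (lam * ((x : ℂ) - a) ^ 2)) :
    wronskian (fun t : ℝ => ((t : ℂ) - a) ^ μ₁ * F (lam * ((t : ℂ) - a) ^ 2))
        (fun t : ℝ => ((t : ℂ) - a) ^ μ₂ * G (lam * ((t : ℂ) - a) ^ 2)) x =
      2 * (lam * ((x : ℂ) - a) ^ 2 * wronskian F G (lam * ((x : ℂ) - a) ^ 2)) +
        (μ₂ - μ₁) * (F (lam * ((x : ℂ) - a) ^ 2) * G (lam * ((x : ℂ) - a) ^ 2)) := by
  have hz : (x : ℂ) - a ≠ 0 := sub_ne_zero.mpr (by exact_mod_cast hx)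
  have hpow : ((x : ℂ) - a) ^ μ₁ * ((x : ℂ) - a) ^ μ₂ = x - a := by
    rw [← cpow_add _ _ hz, hμ, cpow_one]
  have hsq : HasDerivAt (fun t : ℝ => lam * ((t : ℂ) - a) ^ 2) (lam * (2 * ((x : ℂ) - a))) x := by
    simpa using ((((hasDerivAt_id x).ofReal_comp).sub_const (a : ℂ)).pow 2).const_mul lam
  have hFsq : DifferentiableAt ℝ (fun t : ℝ => F (lam * ((t : ℂ) - a) ^ 2)) x :=
    (hF.hasDerivAt.comp x hsq).differentiableAt
  have hGsq : DifferentiableAt ℝ (fun t : ℝ => G (lam * ((t : ℂ) - a) ^ 2)) x :=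
    (hG.hasDerivAt.comp x hsq).differentiableAt
  rw [wronskian_mul_mul (hasDerivAt_ofReal_sub_cpow_const hx μ₁).differentiableAt
      (hasDerivAt_ofReal_sub_cpow_const hx μ₂).differentiableAt hFsq hGsq,
    wronskian_comp (h := fun t : ℝ => lam * ((t : ℂ) - a) ^ 2) hF hG hsq,
    wronskian_ofReal_sub_cpow hx, hpow, hμ, sub_self, cpow_zero]
  ring

/-- `α + β = 2` makes the derivative of the left-hand side vanish identically; at `z = 0` only the
second summand survives. -/
theorem mul_wronskian_add_eq_of_singular_ode {F G q : ℂ → ℂ} {α β : ℂ}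
    (hF : Differentiable ℂ F) (hG : Differentiable ℂ G)
    (hFode : ∀ z, z * deriv (deriv F) z + α * deriv F z = q z * F z)
    (hGode : ∀ z, z * deriv (deriv G) z + β * deriv G z = q z * G z)
    (hαβ : α + β = 2) (z : ℂ) :
    2 * (z * wronskian F G z) + (β - α) * (F z * G z) = (β - α) * (F 0 * G 0) := by
  have hderiv (w : ℂ) :
      HasDerivAt (fun w => 2 * (w * wronskian F G w) + (β - α) * (F w * G w)) 0 w := by
    have hF₁ := (hF w).hasDerivAt
    have hG₁ := (hG w).hasDerivAt
    have hF₂ := (hF.deriv w).hasDerivAt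
    have hG₂ := (hG.deriv w).hasDerivAt
    refine ((((hasDerivAt_id w).mul ((hF₁.mul hG₂).sub (hF₂.mul hG₁))).const_mul 2).add
      ((hF₁.mul hG₁).const_mul (β - α))).congr_deriv ?_
    simp only [id, Pi.mul_apply, Pi.sub_apply]
    linear_combination 2 * F w * hGode w - 2 * G w * hFode w -
      (F w * deriv G w - deriv F w * G w) * hαβ
  simpa using is_const_of_deriv_eq_zero (fun w => (hderiv w).differentiableAt)
    (fun w => (hderiv w).deriv) z 0

theorem summable_mul_pow_of_recurrence {𝕜 : Type*} [NormedField 𝕜] [CompleteSpace 𝕜]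
    {c p : ℕ → 𝕜} {q : 𝕜}
    (hp : Tendsto (fun k => ‖p k‖) atTop atTop) (hrec : ∀ k, p k * c (k + 1) = q * c k) (z : 𝕜) :
    Summable fun k => c k * z ^ k := by
  refine summable_of_ratio_norm_eventually_le (r := 1 / 2) (by norm_num) ?_
  filter_upwards [hp.eventually_gt_atTop 0, hp.eventually_ge_atTop (2 * (‖q‖ * ‖z‖))]
    with k hpos hlarge
  refine le_of_mul_le_mul_left ?_ hpos
  calc ‖p k‖ * ‖c (k + 1) * z ^ (k + 1)‖
      = ‖p k * c (k + 1)‖ * ‖z‖ ^ (k + 1) := by simp only [norm_mul, norm_pow, mul_assoc]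
    _ = ‖q‖ * ‖z‖ * (‖c k‖ * ‖z‖ ^ k) := by rw [hrec, norm_mul, pow_succ]; ring
    _ ≤ ‖p k‖ / 2 * (‖c k‖ * ‖z‖ ^ k) := by gcongr; linarith
    _ = ‖p k‖ * (1 / 2 * ‖c k * z ^ k‖) := by rw [norm_mul, norm_pow]; ring

section PowerSum

/-- The sum of the power series at the origin with coefficients `c`, as a function of its
argument; following `tsum`, it takes the value `0` where the series diverges. -/
def powerSum (c : ℕ → ℂ) (z : ℂ) : ℂ :=
  ∑' k, c k * z ^ k

variable {c : ℕ → ℂ}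

theorem powerSum_zero (c : ℕ → ℂ) : powerSum c 0 = c 0 := by
  rw [powerSum, tsum_eq_single 0 fun k hk => by simp [hk]]
  simp

theorem norm_mul_pow_le_of_mem_ball (b : ℂ) (k : ℕ) {r : ℝ} {z : ℂ}
    (hz : z ∈ Metric.ball 0 r) : ‖b * z ^ k‖ ≤ ‖b * (r : ℂ) ^ k‖ := by
  have hzr : ‖z‖ ≤ ‖(r : ℂ)‖ := by
    simpa using (mem_ball_zero_iff.mp hz).le.trans (le_abs_self r)
  simpa only [norm_mul, norm_pow] using by gcongr

theorem differentiable_powerSum (hc : ∀ z, Summable fun k => c k * z ^ k) :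
    Differentiable ℂ (powerSum c) := fun z =>
  (differentiableOn_tsum_of_summable_norm (hc (‖z‖ + 1 : ℝ)).norm
    (fun k => by fun_prop) Metric.isOpen_ball
    fun k _ => norm_mul_pow_le_of_mem_ball (c k) k).differentiableAt
      (Metric.isOpen_ball.mem_nhds (by simp))

theorem hasSum_deriv_powerSum (hc : ∀ z, Summable fun k => c k * z ^ k) (z : ℂ) :
    HasSum (fun k : ℕ => ((k : ℂ) + 1) * c (k + 1) * z ^ k) (deriv (powerSum c) z) := by
  have hsum := hasSum_deriv_of_summable_norm (hc (‖z‖ + 1 : ℝ)).norm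
    (fun k => by fun_prop) Metric.isOpen_ball
    (fun k _ => norm_mul_pow_le_of_mem_ball (c k) k) (z := z) (by simp)
  have hterm (k : ℕ) : deriv (fun w => c k * w ^ k) z = c k * (k * z ^ (k - 1)) := by simp
  simp only [hterm] at hsum
  simpa [mul_comm, mul_left_comm, mul_assoc] using! (hasSum_nat_add_iff' 1).mpr hsum

theorem hasSum_mul_deriv_powerSum (hc : ∀ z, Summable fun k => c k * z ^ k) (z : ℂ) :
    HasSum (fun k : ℕ => (k : ℂ) * c k * z ^ k) (z * deriv (powerSum c) z) := by
  rw [← hasSum_nat_add_iff' 1]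
  simpa [pow_succ', mul_comm, mul_left_comm, mul_assoc] using
    (hasSum_deriv_powerSum hc z).mul_left z

variable {α q : ℂ}

theorem summable_mul_pow_of_bessel_recurrence
    (hrec : ∀ k : ℕ, ((k : ℂ) + 1) * (k + α) * c (k + 1) = q * c k) (z : ℂ) :
    Summable fun k => c k * z ^ k := by
  have hlinear (b : ℂ) : Tendsto (fun k : ℕ => ‖(k : ℂ) + b‖) atTop atTop :=
    tendsto_norm_atTop_iff_cobounded.mpr
      ((tendsto_add_const_cobounded b).comp tendsto_natCast_atTop_cobounded)
  refine summable_mul_pow_of_recurrence ?_ hrec z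
  simpa only [norm_mul] using (hlinear 1).atTop_mul_atTop₀ (hlinear α)

theorem powerSum_bessel_ode
    (hrec : ∀ k : ℕ, ((k : ℂ) + 1) * (k + α) * c (k + 1) = q * c k) (z : ℂ) :
    z * deriv (deriv (powerSum c)) z + α * deriv (powerSum c) z = q * powerSum c z := by
  have hc := summable_mul_pow_of_bessel_recurrence hrec
  have hsum := hasSum_deriv_powerSum hc
  have hderiv : deriv (powerSum c) = powerSum fun k => (k + 1) * c (k + 1) :=
    funext fun w => (hsum w).tsum_eq.symm
  have hleft := (hasSum_mul_deriv_powerSum (fun w => (hsum w).summable) z).add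
    ((hsum z).mul_left α)
  rw [← hderiv] at hleft
  refine hleft.unique (((hc z).hasSum.mul_left q).congr_fun fun k => ?_)
  linear_combination z ^ k * hrec k

end PowerSum

theorem coefC_zero (ν₀ μ c0 : ℂ) : coefC ν₀ μ c0 0 = c0 := by simp [coefC]

theorem coefC_succ (ν₀ μ c0 : ℂ) (k : ℕ) :
    coefC ν₀ μ c0 (k + 1) = -coefC ν₀ μ c0 k /
      ((2 * ((k : ℂ) + 1) + μ) * (2 * ((k : ℂ) + 1) + μ - 1) - ν₀) := by
  rw [coefC, coefC, Finset.prod_range_succ, div_mul_eq_div_div, ← neg_div, pow_succ, mul_neg_one,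
    neg_mul]

theorem coefC_bessel_recurrence {ν₀ μ : ℂ} (hμ : μ * (μ - 1) = ν₀) (c0 : ℂ) {k : ℕ}
    (hk : (k : ℂ) + (μ + 1 / 2) ≠ 0) :
    ((k : ℂ) + 1) * (k + (μ + 1 / 2)) * coefC ν₀ μ c0 (k + 1) = -1 / 4 * coefC ν₀ μ c0 k := by
  have hfactor : (2 * ((k : ℂ) + 1) + μ) * (2 * ((k : ℂ) + 1) + μ - 1) - ν₀ =
      4 * (((k : ℂ) + 1) * (k + (μ + 1 / 2))) := by
    linear_combination hμ
  have hne : ((k : ℂ) + 1) * (k + (μ + 1 / 2)) ≠ 0 :=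
    mul_ne_zero (Nat.cast_add_one_ne_zero k) hk
  rw [coefC_succ, hfactor, mul_div_assoc', div_eq_iff (mul_ne_zero (by norm_num) hne)]
  ring

theorem wronskian_Cfun {a x : ℝ} (hx : x ≠ a) {ν₀ μ₁ μ₂ : ℂ} (hμ : μ₁ + μ₂ = 1)
    (hμ₁ : μ₁ * (μ₁ - 1) = ν₀)
    (hne₁ : ∀ k : ℕ, (k : ℂ) + (μ₁ + 1 / 2) ≠ 0) (hne₂ : ∀ k : ℕ, (k : ℂ) + (μ₂ + 1 / 2) ≠ 0)
    (c₁ c₂ lam : ℂ) :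
    wronskian (fun t => Cfun a ν₀ μ₁ c₁ t lam) (fun t => Cfun a ν₀ μ₂ c₂ t lam) x =
      (μ₂ - μ₁) * (c₁ * c₂) := by
  have hμ₂ : μ₂ * (μ₂ - 1) = ν₀ := by linear_combination hμ₁ + (μ₂ - μ₁) * hμ
  have hrec₁ k := coefC_bessel_recurrence hμ₁ c₁ (hne₁ k)
  have hrec₂ k := coefC_bessel_recurrence hμ₂ c₂ (hne₂ k)
  have hF := differentiable_powerSum (summable_mul_pow_of_bessel_recurrence hrec₁)
  have hG := differentiable_powerSum (summable_mul_pow_of_bessel_recurrence hrec₂)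
  have hinvariant := mul_wronskian_add_eq_of_singular_ode hF hG (q := fun _ => -1 / 4)
    (powerSum_bessel_ode hrec₁) (powerSum_bessel_ode hrec₂) (by linear_combination hμ)
    (lam * ((x : ℂ) - a) ^ 2)
  rw [powerSum_zero, powerSum_zero, coefC_zero, coefC_zero, add_sub_add_right_eq_sub] at hinvariant
  exact (wronskian_cpow_mul_comp_sq hx hμ (hF _) (hG _)).trans hinvariant

theorem ne_intCast_of_re_pos {ν : ℂ} (hν : 0 < ν.re) (hνint : ∀ n : ℕ, 0 < n → ν ≠ n) (n : ℤ) :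
    ν ≠ n := by
  rintro rfl
  have hn : 0 < n := by simpa using hν
  exact hνint n.toNat (by omega) (by exact_mod_cast (Int.toNat_of_nonneg hn.le).symm)

theorem series_solutions_unit_wronskian_general
    (a : ℝ) (ν ν₀ c10 c20 : ℂ)
    (hν : ∀ n : ℤ, n ≠ 0 → ν ≠ n) (hν₀ : ν₀ = ν ^ 2 - 1 / 4) :
    ∀ lam : ℂ, ∀ x : ℝ, x ≠ a →
      Cfun a ν₀ (-ν + 1 / 2) c10 x lam *
          deriv (fun t => Cfun a ν₀ (ν + 1 / 2) c20 t lam) x -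
        deriv (fun t => Cfun a ν₀ (-ν + 1 / 2) c10 t lam) x *
          Cfun a ν₀ (ν + 1 / 2) c20 x lam = 2 * ν * (c10 * c20) := by
  intro lam x hx
  have hW := wronskian_Cfun hx (ν₀ := ν₀) (μ₁ := -ν + 1 / 2) (μ₂ := ν + 1 / 2) (by ring)
    (by rw [hν₀]; ring)
    (fun k hk => hν (k + 1) (by positivity) (by push_cast; linear_combination -hk))
    (fun k hk => hν (-(k + 1)) (neg_ne_zero.mpr (by positivity))
      (by push_cast; linear_combination hk))
    c10 c20 lam
  rw [wronskian] at hW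
  linear_combination hW

/-- the normalized Wronskian of the series solutions: with
`μ₁ = −ν + 1/2`, `μ₂ = ν + 1/2` and `c₁₀c₂₀ = (2ν)⁻¹`, one has
`C₁(x,λ)C₂′(x,λ) − C₁′(x,λ)C₂(x,λ) = 1` for every `λ ∈ ℂ` and every `x ≠ a`. -/
theorem series_solutions_unit_wronskian
    (a : ℝ) (ν ν₀ c10 c20 : ℂ)
    (ha : 0 < a)
    (hν : 0 < ν.re) (hνint : ∀ n : ℕ, 0 < n → ν ≠ (n : ℂ)) (hν₀ : ν₀ = ν ^ 2 - 1 / 4)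
    (hc : c10 * c20 = 1 / (2 * ν)) (hc10 : c10 ≠ 0) (hc20 : c20 ≠ 0) :
    ∀ lam : ℂ, ∀ x : ℝ, x ≠ a →
      Cfun a ν₀ (-ν + 1 / 2) c10 x lam *
          deriv (fun t => Cfun a ν₀ (ν + 1 / 2) c20 t lam) x -
        deriv (fun t => Cfun a ν₀ (-ν + 1 / 2) c10 t lam) x *
          Cfun a ν₀ (ν + 1 / 2) c20 x lam = 1 := by
  intro lam x hx
  have hint := ne_intCast_of_re_pos hν hνint
  rw [series_solutions_unit_wronskian_general a ν ν₀ c10 c20 (fun n _ => hint n) hν₀ lam x hx, hc,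
    mul_one_div_cancel (mul_ne_zero two_ne_zero (by simpa using hint 0))]
end
end

section
/- Estimates for the matrix P: let x ≥ 0 and suppose φ, Φ (for L) and φ̃, Φ̃ (for L̃) satisfy, for λ = ρ² with ρ in a region G_δ ∩ G̃_δ and m = 0,1: |φ^{(m)}(x,λ)| ≤ C|ρ|^{m−1}|e^{−iρx}|, |Φ^{(m)}(x,λ)| ≤ C_δ|ρ|^{m}|e^{iρx}|, |φ^{(m)}(x,λ) − φ̃^{(m)}(x,λ)| ≤ C|ρ|^{m−2}|e^{−iρx}|, |Φ^{(m)}(x,λ) − Φ̃^{(m)}(x,λ)| ≤ C_δ|ρ|^{m−1}|e^{iρx}| (and the same first two bounds for φ̃, Φ̃), together with ⟨Φ̃(·,λ), φ̃(·,λ)⟩ = η(x). Define P_{k1}(x,λ) = −(1/η(x))(φ^{(k−1)}(x,λ)Φ̃′(x,λ) − Φ^{(k−1)}(x,λ)φ̃′(x,λ)) and P_{k2}(x,λ) = −(1/η(x))(Φ^{(k−1)}(x,λ)φ̃(x,λ) − φ^{(k−1)}(x,λ)Φ̃(x,λ)) for k = 1,2. Then there exists a constant C′ (depending on δ) such that for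 all large |ρ| with ρ ∈ G_δ ∩ G̃_δ and all x ≥ 0: |P_{11}(x,λ) − 1| ≤ C′/|ρ|, |P_{12}(x,λ)| ≤ C′/|ρ|, |P_{22}(x,λ) − 1| ≤ C′/|ρ|, and |P_{21}(x,λ)| ≤ C′. -/
/-!
Write `F` and `F̃` for the fundamental matrices with rows `(φ, Φ)`, `(φ′, Φ′)` and `(φ̃, Φ̃)`,
`(φ̃′, Φ̃′)`. Since `det F̃ = -⟨Φ̃, φ̃⟩ = -η`, Cramer's rule identifies `P` with `F F̃⁻¹`, and so
`P - 1 = (F - F̃) F̃⁻¹`. In each product of an entry of `F - F̃` with an entry of the adjugate of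
`F̃` the exponentials cancel, and the remaining powers of `|ρ|` give
`(P - 1)_{ik} = O(|ρ|^{i-k-1})`, with indices `0` and `1`.
-/

open Complex Set Filter MeasureTheory

noncomputable section

/-- The Wronskian `⟨y,z⟩ = y z′ − y′ z`. -/
def Wr (y z : ℝ → ℂ) (x : ℝ) : ℂ := y x * deriv z x - deriv y x * z x

/-- `η(x) = 1` on `J₋` and `η(x) = det A` on `J₊`. -/
def etaF (a : ℝ) (detA : ℂ) (x : ℝ) : ℂ := if x < a then 1 else detA

section WeightedMatrixBounds

variable {𝕜 : Type*} [NormedField 𝕜] {M N : Matrix (Fin 2) (Fin 2) 𝕜} {u v : Fin 2 → ℝ} {s : ℝ}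

theorem norm_adjugate_fin_two_apply_le (hN : ∀ i j, ‖N i j‖ ≤ u i * v j) (j k : Fin 2) :
    ‖N.adjugate j k‖ ≤ u k.rev * v j.rev := by
  have h := hN k.rev j.rev
  fin_cases j <;> fin_cases k <;> simpa [Matrix.adjugate_fin_two] using h

theorem norm_mul_adjugate_fin_two_apply_le (hM : ∀ i j, ‖M i j‖ ≤ s * (u i * v j))
    (hN : ∀ i j, ‖N i j‖ ≤ u i * v j) (i k : Fin 2) :
    ‖(M * N.adjugate) i k‖ ≤ 2 * s * (v 0 * v 1) * (u i * u k.rev) := by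
  have hterm (j : Fin 2) :
      ‖M i j * N.adjugate j k‖ ≤ s * (u i * v j) * (u k.rev * v j.rev) :=
    norm_mul_le_of_le (hM i j) (norm_adjugate_fin_two_apply_le hN j k)
  calc ‖(M * N.adjugate) i k‖
      ≤ ∑ j, s * (u i * v j) * (u k.rev * v j.rev) := by
        rw [Matrix.mul_apply]
        exact norm_sum_le_of_le _ fun j _ ↦ hterm j
    _ = 2 * s * (v 0 * v 1) * (u i * u k.rev) := by
        rw [Fin.sum_univ_two, show (0 : Fin 2).rev = 1 from rfl, show (1 : Fin 2).rev = 0 from rfl]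
        ring

theorem norm_mul_inv_sub_one_fin_two_apply_le (hdet : N.det ≠ 0)
    (hN : ∀ i j, ‖N i j‖ ≤ u i * v j) (hMN : ∀ i j, ‖(M - N) i j‖ ≤ s * (u i * v j))
    (i k : Fin 2) :
    ‖(M * N⁻¹ - 1) i k‖ ≤ 2 * s * (v 0 * v 1) * (u i * u k.rev) / ‖N.det‖ := by
  have hfactor : M * N⁻¹ - 1 = N.det⁻¹ • ((M - N) * N.adjugate) := by
    rw [← Matrix.mul_nonsing_inv N hdet.isUnit, ← sub_mul, Matrix.inv_def,
      Ring.inverse_eq_inv', Matrix.mul_smul]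
  rw [hfactor, Matrix.smul_apply, norm_smul, norm_inv, inv_mul_eq_div]
  gcongr
  exact norm_mul_adjugate_fin_two_apply_le hMN hN i k

end WeightedMatrixBounds

/-- The fundamental matrix of a pair `(y, z)`: its columns are the values and derivatives of `y`
and of `z`. -/
def fundamentalMatrix (y z : ℝ → ℂ) (x : ℝ) : Matrix (Fin 2) (Fin 2) ℂ :=
  !![y x, z x; deriv y x, deriv z x]

/-- The matrix `P` comparing the pair `(y, z)` with the pair `(yt, zt)`, given by Cramer's rule
for `P F(yt, zt) = F(y, z)`, where `F` is the fundamental matrix. The factor `η` is an argument of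
its own; it stands for the Wronskian `⟨zt, yt⟩`. -/
def mappingMatrix (η : ℂ) (y z yt zt : ℝ → ℂ) (x : ℝ) : Matrix (Fin 2) (Fin 2) ℂ :=
  !![-(1 / η) * (y x * deriv zt x - z x * deriv yt x),
      -(1 / η) * (z x * yt x - y x * zt x);
    -(1 / η) * (deriv y x * deriv zt x - deriv z x * deriv yt x),
      -(1 / η) * (deriv z x * yt x - deriv y x * zt x)]

theorem det_fundamentalMatrix (y z : ℝ → ℂ) (x : ℝ) :
    (fundamentalMatrix y z x).det = -Wr z y x := by
  rw [fundamentalMatrix, Matrix.det_fin_two_of, Wr]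
  ring

theorem mappingMatrix_eq_mul_inv (y z yt zt : ℝ → ℂ) (x : ℝ) :
    mappingMatrix (Wr zt yt x) y z yt zt x =
      fundamentalMatrix y z x * (fundamentalMatrix yt zt x)⁻¹ := by
  rw [Matrix.inv_def, det_fundamentalMatrix, Ring.inverse_eq_inv', inv_neg, ← one_div,
    Matrix.mul_smul]
  simp only [mappingMatrix, fundamentalMatrix, Matrix.adjugate_fin_two_of, Matrix.mul_fin_two,
    Matrix.smul_of, Matrix.smul_cons, Matrix.smul_empty, smul_eq_mul]
  ring_nf

theorem norm_mappingMatrix_sub_one_apply_le {y z yt zt : ℝ → ℂ} {x C D r t : ℝ} (hr : 0 < r)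
    (hW : Wr zt yt x ≠ 0)
    (hyt : ‖yt x‖ ≤ C * r⁻¹ * Real.exp t) (hyt' : ‖deriv yt x‖ ≤ C * Real.exp t)
    (hzt : ‖zt x‖ ≤ D * Real.exp (-t)) (hzt' : ‖deriv zt x‖ ≤ D * r * Real.exp (-t))
    (hy : ‖y x - yt x‖ ≤ C * r⁻¹ ^ 2 * Real.exp t)
    (hy' : ‖deriv y x - deriv yt x‖ ≤ C * r⁻¹ * Real.exp t)
    (hz : ‖z x - zt x‖ ≤ D * r⁻¹ * Real.exp (-t))
    (hz' : ‖deriv z x - deriv zt x‖ ≤ D * Real.exp (-t)) (i k : Fin 2) :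
    ‖(mappingMatrix (Wr zt yt x) y z yt zt x - 1) i k‖ ≤
      2 * (C * D) / ‖Wr zt yt x‖ * r ^ ((i : ℤ) - k - 1) := by
  let u : Fin 2 → ℝ := ![1, r]
  let v : Fin 2 → ℝ := ![C * r⁻¹ * Real.exp t, D * Real.exp (-t)]
  have hdet : (fundamentalMatrix yt zt x).det ≠ 0 := by simpa [det_fundamentalMatrix] using hW
  have hN : ∀ i j, ‖fundamentalMatrix yt zt x i j‖ ≤ u i * v j := by
    simp only [Fin.forall_fin_two]
    exact ⟨⟨hyt.trans_eq (one_mul _).symm, hzt.trans_eq (one_mul _).symm⟩,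
      hyt'.trans_eq (by change _ = r * (C * r⁻¹ * _); field_simp),
      hzt'.trans_eq (by change _ = r * (D * _); ring)⟩
  have hMN : ∀ i j, ‖(fundamentalMatrix y z x - fundamentalMatrix yt zt x) i j‖ ≤
      r⁻¹ * (u i * v j) := by
    simp only [Fin.forall_fin_two]
    exact ⟨⟨hy.trans_eq (by change _ = r⁻¹ * (1 * (C * r⁻¹ * _)); ring),
        hz.trans_eq (by change _ = r⁻¹ * (1 * (D * _)); ring)⟩,
      hy'.trans_eq (by change _ = r⁻¹ * (r * (C * r⁻¹ * _)); field_simp),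
      hz'.trans_eq (by change _ = r⁻¹ * (r * (D * _)); field_simp)⟩
  have hv : v 0 * v 1 = C * D * r⁻¹ := by
    simp only [v, Matrix.cons_val_zero, Matrix.cons_val_one, Real.exp_neg]
    field_simp
  have hu : r⁻¹ ^ 2 * (u i * u k.rev) = r ^ ((i : ℤ) - k - 1) := by
    have hui : u i = r ^ (i : ℤ) := by fin_cases i <;> simp [u]
    have huk : u k.rev = r ^ (1 - k : ℤ) := by fin_cases k <;> simp [u]
    rw [hui, huk, ← zpow_natCast, inv_zpow', ← zpow_add₀ hr.ne', ← zpow_add₀ hr.ne']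
    congr 1
    push_cast
    ring
  rw [mappingMatrix_eq_mul_inv]
  refine (norm_mul_inv_sub_one_fin_two_apply_le hdet hN hMN i k).trans_eq ?_
  rw [det_fundamentalMatrix, norm_neg, hv, ← hu]
  ring

theorem min_one_norm_le_norm_etaF (a : ℝ) (detA : ℂ) (x : ℝ) :
    min 1 ‖detA‖ ≤ ‖etaF a detA x‖ := by
  unfold etaF
  split_ifs <;> simp

theorem P_matrix_estimates_general {φ Φ φt Φt : ℝ → ℂ → ℂ} {η : ℝ → ℂ} {G : Set ℂ}
    {C Cδ ε : ℝ} (hε : 0 < ε) (hη : ∀ x, 0 ≤ x → ε ≤ ‖η x‖)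
    (hWr : ∀ ρ ∈ G, ∀ x, 0 ≤ x → Wr (fun t ↦ Φt t (ρ ^ 2)) (fun t ↦ φt t (ρ ^ 2)) x = η x)
    (hest : ∀ ρ ∈ G, ∀ x, 0 ≤ x →
      ‖φt x (ρ ^ 2)‖ ≤ C * ‖ρ‖⁻¹ * Real.exp (ρ.im * x) ∧
      ‖deriv (fun t ↦ φt t (ρ ^ 2)) x‖ ≤ C * Real.exp (ρ.im * x) ∧
      ‖Φt x (ρ ^ 2)‖ ≤ Cδ * Real.exp (-(ρ.im * x)) ∧
      ‖deriv (fun t ↦ Φt t (ρ ^ 2)) x‖ ≤ Cδ * ‖ρ‖ * Real.exp (-(ρ.im * x)))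
    (hdiff : ∀ ρ ∈ G, ∀ x, 0 ≤ x →
      ‖φ x (ρ ^ 2) - φt x (ρ ^ 2)‖ ≤ C * ‖ρ‖⁻¹ ^ 2 * Real.exp (ρ.im * x) ∧
      ‖deriv (fun t ↦ φ t (ρ ^ 2)) x - deriv (fun t ↦ φt t (ρ ^ 2)) x‖ ≤
        C * ‖ρ‖⁻¹ * Real.exp (ρ.im * x) ∧
      ‖Φ x (ρ ^ 2) - Φt x (ρ ^ 2)‖ ≤ Cδ * ‖ρ‖⁻¹ * Real.exp (-(ρ.im * x)) ∧
      ‖deriv (fun t ↦ Φ t (ρ ^ 2)) x - deriv (fun t ↦ Φt t (ρ ^ 2)) x‖ ≤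
        Cδ * Real.exp (-(ρ.im * x))) :
    ∃ C', 0 < C' ∧ ∀ ρ ∈ G, ρ ≠ 0 → ∀ x, 0 ≤ x → ∀ i k : Fin 2,
      ‖(mappingMatrix (η x) (fun t ↦ φ t (ρ ^ 2)) (fun t ↦ Φ t (ρ ^ 2))
          (fun t ↦ φt t (ρ ^ 2)) (fun t ↦ Φt t (ρ ^ 2)) x - 1) i k‖ ≤
        C' * ‖ρ‖ ^ ((i : ℤ) - k - 1) := by
  refine ⟨2 * |C * Cδ| / ε + 1, by positivity, fun ρ hρ hρ0 x hx i k ↦ ?_⟩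
  obtain ⟨hφt, hφt', hΦt, hΦt'⟩ := hest ρ hρ x hx
  obtain ⟨hφ, hφ', hΦ, hΦ'⟩ := hdiff ρ hρ x hx
  have hηx : ε ≤ ‖η x‖ := hη x hx
  rw [← hWr ρ hρ x hx] at hηx ⊢
  refine (norm_mappingMatrix_sub_one_apply_le (norm_pos_iff.2 hρ0)
    (norm_pos_iff.1 (hε.trans_le hηx)) hφt hφt' hΦt hΦt' hφ hφ' hΦ hΦ' i k).trans ?_
  gcongr
  calc 2 * (C * Cδ) / _ ≤ 2 * |C * Cδ| / ε := by gcongr; exact le_abs_self _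
    _ ≤ 2 * |C * Cδ| / ε + 1 := by linarith

/-- estimates for the matrix `P`: with
`P_{k1} = −(1/η)(φ^{(k−1)}Φ̃′ − Φ^{(k−1)}φ̃′)`,
`P_{k2} = −(1/η)(Φ^{(k−1)}φ̃ − φ^{(k−1)}Φ̃)`,
one has `P_{11} − 1, P_{12}, P_{22} − 1 = O(ρ⁻¹)` and `P_{21} = O(1)` uniformly in
`x ≥ 0` for large `|ρ|`, `ρ ∈ G_δ ∩ G̃_δ`. -/
theorem P_matrix_estimates
    (a δ : ℝ) (detA : ℂ) (φ Φ φt Φt : ℝ → ℂ → ℂ) (Λ Λt : Set ℂ) (C Cδ : ℝ)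
    (ha : 0 < a) (hδ : 0 < δ) (hdetA : detA ≠ 0)
    -- the Wronskian identity ⟨Φ̃(·,λ), φ̃(·,λ)⟩ = η(x)
    (hWr : ∀ ρ lam : ℂ, ρ ^ 2 = lam → 0 ≤ ρ.im →
      (∀ σ ∈ Λ, δ ≤ ‖ρ - σ‖) → (∀ σ ∈ Λt, δ ≤ ‖ρ - σ‖) →
      ∀ x : ℝ, 0 ≤ x → Wr (fun t => Φt t lam) (fun t => φt t lam) x = etaF a detA x)
    -- the standard estimates for φ, Φ, φ̃, Φ̃ on G_δ ∩ G̃_δ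
    (hest : ∀ ρ lam : ℂ, ρ ^ 2 = lam → 0 ≤ ρ.im →
      (∀ σ ∈ Λ, δ ≤ ‖ρ - σ‖) → (∀ σ ∈ Λt, δ ≤ ‖ρ - σ‖) →
      ∀ x : ℝ, 0 ≤ x →
      ‖φ x lam‖ ≤ C * ‖ρ‖⁻¹ * Real.exp (ρ.im * x) ∧
      ‖deriv (fun t => φ t lam) x‖ ≤ C * Real.exp (ρ.im * x) ∧
      ‖φt x lam‖ ≤ C * ‖ρ‖⁻¹ * Real.exp (ρ.im * x) ∧
      ‖deriv (fun t => φt t lam) x‖ ≤ C * Real.exp (ρ.im * x) ∧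
      ‖Φ x lam‖ ≤ Cδ * Real.exp (-(ρ.im * x)) ∧
      ‖deriv (fun t => Φ t lam) x‖ ≤ Cδ * ‖ρ‖ * Real.exp (-(ρ.im * x)) ∧
      ‖Φt x lam‖ ≤ Cδ * Real.exp (-(ρ.im * x)) ∧
      ‖deriv (fun t => Φt t lam) x‖ ≤ Cδ * ‖ρ‖ * Real.exp (-(ρ.im * x)))
    -- and the difference estimates
    (hdiff : ∀ ρ lam : ℂ, ρ ^ 2 = lam → 0 ≤ ρ.im →
      (∀ σ ∈ Λ, δ ≤ ‖ρ - σ‖) → (∀ σ ∈ Λt, δ ≤ ‖ρ - σ‖) →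
      ∀ x : ℝ, 0 ≤ x →
      ‖φ x lam - φt x lam‖ ≤ C * (‖ρ‖⁻¹) ^ 2 * Real.exp (ρ.im * x) ∧
      ‖deriv (fun t => φ t lam) x - deriv (fun t => φt t lam) x‖ ≤
        C * ‖ρ‖⁻¹ * Real.exp (ρ.im * x) ∧
      ‖Φ x lam - Φt x lam‖ ≤ Cδ * ‖ρ‖⁻¹ * Real.exp (-(ρ.im * x)) ∧
      ‖deriv (fun t => Φ t lam) x - deriv (fun t => Φt t lam) x‖ ≤
        Cδ * Real.exp (-(ρ.im * x))) :
    ∃ C' R : ℝ, 0 < C' ∧ ∀ ρ lam : ℂ, ρ ^ 2 = lam → 0 ≤ ρ.im →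
      (∀ σ ∈ Λ, δ ≤ ‖ρ - σ‖) → (∀ σ ∈ Λt, δ ≤ ‖ρ - σ‖) → R ≤ ‖ρ‖ →
      ∀ x : ℝ, 0 ≤ x →
      -- ‖P₁₁ − 1‖ ≤ C′/‖ρ‖
      ‖-(1 / etaF a detA x) *
          (φ x lam * deriv (fun t => Φt t lam) x -
            Φ x lam * deriv (fun t => φt t lam) x) - 1‖ ≤ C' / ‖ρ‖ ∧
      -- ‖P₁₂‖ ≤ C′/‖ρ‖
      ‖-(1 / etaF a detA x) * (Φ x lam * φt x lam - φ x lam * Φt x lam)‖ ≤ C' / ‖ρ‖ ∧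
      -- ‖P₂₂ − 1‖ ≤ C′/‖ρ‖
      ‖-(1 / etaF a detA x) *
          (deriv (fun t => Φ t lam) x * φt x lam -
            deriv (fun t => φ t lam) x * Φt x lam) - 1‖ ≤ C' / ‖ρ‖ ∧
      -- ‖P₂₁‖ ≤ C′
      ‖-(1 / etaF a detA x) *
          (deriv (fun t => φ t lam) x * deriv (fun t => Φt t lam) x -
            deriv (fun t => Φ t lam) x * deriv (fun t => φt t lam) x)‖ ≤ C' := by
  obtain ⟨C', hC', h⟩ := P_matrix_estimates_general
    (G := {ρ | 0 ≤ ρ.im ∧ (∀ σ ∈ Λ, δ ≤ ‖ρ - σ‖) ∧ ∀ σ ∈ Λt, δ ≤ ‖ρ - σ‖})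
    (lt_min one_pos (norm_pos_iff.2 hdetA)) (fun x _ ↦ min_one_norm_le_norm_etaF a detA x)
    (fun ρ hρ ↦ hWr ρ _ rfl hρ.1 hρ.2.1 hρ.2.2)
    (fun ρ hρ x hx ↦
      have ⟨_, _, hφt, hφt', _, _, hΦt, hΦt'⟩ := hest ρ _ rfl hρ.1 hρ.2.1 hρ.2.2 x hx
      ⟨hφt, hφt', hΦt, hΦt'⟩)
    (fun ρ hρ ↦ hdiff ρ _ rfl hρ.1 hρ.2.1 hρ.2.2)
  refine ⟨C', 1, hC', ?_⟩
  rintro ρ _ rfl him hΛ hΛt hρ x hx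
  have hP := h ρ ⟨him, hΛ, hΛt⟩ (norm_pos_iff.1 (one_pos.trans_le hρ)) x hx
  have h12 : C' * ‖ρ‖ ^ (-2 : ℤ) ≤ C' * ‖ρ‖ ^ (-1 : ℤ) := by gcongr; norm_num
  simp only [div_eq_mul_inv C', ← zpow_neg_one]
  refine ⟨hP 0 0, ?_, hP 1 1, ?_⟩
  · simpa [mappingMatrix] using (hP 0 1).trans h12
  · simpa [mappingMatrix] using hP 1 0
end
end

section
/- Cauchy integral representation on the parabolic contour: let h > 0, let γ be the parabola {λ = u + iv : u = v²/(4h²) − h²} in the complex λ-plane (the image of the line {Im ρ = h} under λ = ρ², suitably oriented), and let J_γ = {λ : λ ∉ γ ∪ int γ} be its exterior. Suppose F is analytic on an open set containing J_γ ∪ γ and F(λ) = O(|λ|^{−1}) as |λ| → ∞. Then for every λ ∈ J_γ one has F(λ) = (1/(2πi)) ∫_γ F(μ)/(λ − μ) dμ, where the integral is understood as the principal value lim_{R→∞} ∫_{γ_R} over truncations γ_R of γ. -/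
open Complex Set Filter MeasureTheory

noncomputable section

/-- Principal value of the contour integral `∫_γ F(μ) dμ` over the parabola
`γ = {λ = u+iv : u = v²/(4h²) − h²}` (the image of `{Im ρ = h}` under `λ = ρ²`),
oriented as in the paper (counterclockwise around the interior region `int γ`):
`PVGamma h F J` means `lim_{R→∞} ∫_{γ_R} F(μ) dμ = J`. -/
def PVGamma (h : ℝ) (F : ℂ → ℂ) (J : ℂ) : Prop :=
  Tendsto (fun R : ℝ => ∫ t in (-R)..R,
      F (((t : ℂ) + Complex.I * (h : ℂ)) ^ 2) * (-2 * ((t : ℂ) + Complex.I * (h : ℂ))))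
    atTop (nhds J)

/-- The exterior `J_γ = {λ : λ ∉ γ ∪ int γ}` of the parabola `γ`. -/
def JGamma (h : ℝ) : Set ℂ := {lam : ℂ | lam.re < lam.im ^ 2 / (4 * h ^ 2) - h ^ 2}

/-- The closed exterior `J_γ ∪ γ` of the parabola `γ`. -/
def ExtGamma (h : ℝ) : Set ℂ := {lam : ℂ | lam.re ≤ lam.im ^ 2 / (4 * h ^ 2) - h ^ 2}

/-!
Under `μ = (t + ih)²` the contour becomes the real line, the exterior `J_γ` becomes the upper half
plane, and the Cauchy kernel becomes `dμ / (μ - lam) = (1 / (t - z) + 1 / (t - w)) dt`, where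
`z` and `w` are the two preimages of `lam`, one in each half plane. Hence everything reduces to
Cauchy's formula on the upper half plane for a function vanishing at infinity: the pole `w` below
the line contributes nothing, and the pole `z` contributes `2πi` times the value at `z`. The latter
is seen by subtracting the value at `z` times `1 / (ρ - z) - 1 / (ρ - conj z)`, a multiple of the
Cauchy density on the real line: this removes the pole and leaves a function that is `o(1 / |ρ|)`
at infinity, whose integral vanishes by Cauchy's theorem on large rectangles.
-/

open Bornology ComplexConjugate ProbabilityTheory Topology
open UpperHalfPlane (upperHalfPlaneSet isOpen_upperHalfPlaneSet)

local notation "ℍₒ" => upperHalfPlaneSet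

section Infinity

theorem tendsto_mul_inv_sub_const_cobounded {𝕜 : Type*} [NormedField 𝕜] (a : 𝕜) :
    Tendsto (fun x => x * (x - a)⁻¹) (cobounded 𝕜) (𝓝 1) := by
  have hsub : Tendsto (fun x => 1 + a * (x - a)⁻¹) (cobounded 𝕜) (𝓝 1) := by
    simpa using
      ((tendsto_inv₀_cobounded.comp (tendsto_sub_const_cobounded a)).const_mul a).const_add 1
  refine hsub.congr' ?_
  filter_upwards [eventually_ne_cobounded a] with x hx
  have hxa : x - a ≠ 0 := sub_ne_zero.2 hx
  field_simp
  ring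

variable {𝕜 E : Type*} [NormedAddCommGroup E] {f : 𝕜 → E} {l : Filter 𝕜} {v : E}

theorem tendsto_smul_inv_sub_smul [NormedField 𝕜] [NormedSpace 𝕜 E] (hl : l ≤ cobounded 𝕜) (a : 𝕜)
    (hf : Tendsto f l (𝓝 v)) : Tendsto (fun x => x • (x - a)⁻¹ • f x) l (𝓝 v) := by
  simpa only [smul_smul, one_smul] using
    ((tendsto_mul_inv_sub_const_cobounded a).mono_left hl).smul hf

theorem tendsto_smul_dslope [NontriviallyNormedField 𝕜] [NormedSpace 𝕜 E] (hl : l ≤ cobounded 𝕜)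
    (a : 𝕜) (hf : Tendsto f l (𝓝 v)) :
    Tendsto (fun x => x • dslope f a x) l (𝓝 (v - f a)) := by
  refine (tendsto_smul_inv_sub_smul hl a (hf.sub_const (f a))).congr' ?_
  filter_upwards [hl (eventually_ne_cobounded a)] with x hx
  rw [dslope_of_ne f hx, slope_def_module]

theorem tendsto_zero_of_norm_le_div_norm {X : Type*} [SeminormedAddGroup X] {f : X → E}
    {s : Set X} {C R : ℝ} (hf : ∀ x ∈ s, R ≤ ‖x‖ → ‖f x‖ ≤ C / ‖x‖) :
    Tendsto f (cobounded X ⊓ 𝓟 s) (𝓝 0) := by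
  refine squeeze_zero_norm' ?_
    ((tendsto_norm_cobounded_atTop.const_div_atTop C).mono_left inf_le_left)
  rw [eventually_inf_principal]
  filter_upwards [eventually_cobounded_le_norm R] with x hx hxs using hf x hxs hx

end Infinity

section HalfPlane

theorem continuous_comp_ofReal {X : Type*} [TopologicalSpace X] {f : ℂ → X}
    (hf : ContinuousOn f (closure ℍₒ)) : Continuous fun t : ℝ => f t :=
  hf.comp_continuous continuous_ofReal fun t => by simp

variable {E : Type*} [NormedAddCommGroup E] [NormedSpace ℂ E] {f : ℂ → E}

theorem integral_real_eq_of_diffContOnCl {R : ℝ} (hR : 0 ≤ R) (hf : DiffContOnCl ℂ f ℍₒ) :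
    ∫ t in -R..R, f t = (∫ t in -R..R, f (t + R * I))
      - I • (∫ y in 0..R, f (R + y * I)) + I • ∫ y in 0..R, f ((-R : ℝ) + y * I) := by
  have hrect := integral_boundary_rect_eq_zero_of_continuousOn_of_differentiableOn f ⟨-R, 0⟩ ⟨R, R⟩
    (hf.continuousOn.mono fun ρ hρ => by
      have him := (mem_reProdIm.1 hρ).2
      rw [uIcc_of_le hR] at him
      simpa using him.1)
    (hf.differentiableOn.mono fun ρ hρ => by
      have him := (mem_reProdIm.1 hρ).2
      rw [min_eq_left hR] at him
      exact him.1)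
  simp only [ofReal_zero, zero_mul, add_zero] at hrect
  rw [← sub_eq_zero, ← hrect]
  abel

theorem norm_integral_real_le_of_diffContOnCl {R c : ℝ} (hR : 0 < R)
    (hf : DiffContOnCl ℂ f ℍₒ) (hc : ∀ ρ ∈ ℍₒ, R ≤ ‖ρ‖ → ‖f ρ‖ ≤ c) :
    ‖∫ t in -R..R, f t‖ ≤ 4 * c * R := by
  have htop : ‖∫ t in -R..R, f (t + R * I)‖ ≤ c * |R - -R| :=
    intervalIntegral.norm_integral_le_of_norm_le_const fun t _ =>
      hc _ (by simpa using hR) (by simpa [abs_of_pos hR] using abs_im_le_norm (t + R * I))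
  have hside (s : ℝ) (hs : |s| = R) : ‖I • ∫ y in 0..R, f (s + y * I)‖ ≤ c * |R - 0| := by
    rw [norm_smul, norm_I, one_mul]
    refine intervalIntegral.norm_integral_le_of_norm_le_const fun y hy => hc _ ?_ ?_
    · simpa using (uIoc_of_le hR.le ▸ hy).1
    · simpa [hs] using abs_re_le_norm (s + y * I)
  have hright := hside R (abs_of_pos hR)
  have hleft := hside (-R) (by rw [abs_neg, abs_of_pos hR])
  rw [integral_real_eq_of_diffContOnCl hR.le hf]
  calc _ ≤ c * |R - -R| + c * |R - 0| + c * |R - 0| :=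
        norm_add_le_of_le (norm_sub_le_of_le htop hright) hleft
    _ = 4 * c * R := by
        rw [sub_neg_eq_add, sub_zero, abs_of_pos (add_pos hR hR), abs_of_pos hR]
        ring

theorem tendsto_integral_real_zero (hf : DiffContOnCl ℂ f ℍₒ)
    (hf₀ : Tendsto (fun ρ => ρ • f ρ) (cobounded ℂ ⊓ 𝓟 ℍₒ) (𝓝 0)) :
    Tendsto (fun R : ℝ => ∫ t in -R..R, f t) atTop (𝓝 0) := by
  rw [NormedAddGroup.tendsto_nhds_zero]
  intro ε hε
  have hsmall : ∀ᶠ ρ in cobounded ℂ, ρ ∈ ℍₒ → ‖ρ • f ρ‖ < ε / 8 :=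
    eventually_inf_principal.1 (NormedAddGroup.tendsto_nhds_zero.1 hf₀ _ (by positivity))
  rw [← comap_norm_atTop, eventually_comap] at hsmall
  filter_upwards [eventually_forall_ge_atTop.2 hsmall, eventually_gt_atTop 0] with R hsmall hR
  have hbound (ρ : ℂ) (hρ : ρ ∈ ℍₒ) (hRρ : R ≤ ‖ρ‖) : ‖f ρ‖ ≤ ε / 8 / R := by
    rw [le_div_iff₀ hR]
    calc ‖f ρ‖ * R ≤ ‖f ρ‖ * ‖ρ‖ := by gcongr
      _ = ‖ρ • f ρ‖ := by rw [norm_smul, mul_comm]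
      _ ≤ ε / 8 := (hsmall ‖ρ‖ hRρ ρ rfl hρ).le
  calc ‖∫ t in -R..R, f t‖ ≤ 4 * (ε / 8 / R) * R :=
        norm_integral_real_le_of_diffContOnCl hR hf hbound
    _ = ε / 2 := by field_simp; norm_num
    _ < ε := half_lt_self hε

theorem ofReal_sub_ne_zero_of_im_ne_zero {w : ℂ} (hw : w.im ≠ 0) (t : ℝ) : (t : ℂ) - w ≠ 0 :=
  fun h => hw (by simpa using congrArg im h)

theorem diffContOnCl_inv_sub_const {𝕜 : Type*} [NontriviallyNormedField 𝕜] {s : Set 𝕜} {w : 𝕜}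
    (hw : w ∉ closure s) : DiffContOnCl 𝕜 (fun ρ => (ρ - w)⁻¹) s :=
  (differentiable_id.sub_const w).diffContOnCl.inv fun _ hρ hρw => hw (sub_eq_zero.1 hρw ▸ hρ)

theorem intervalIntegrable_inv_sub_smul {g : ℝ → E} {w : ℂ} (hg : Continuous g) (hw : w.im ≠ 0)
    (a b : ℝ) : IntervalIntegrable (fun t : ℝ => ((t : ℂ) - w)⁻¹ • g t) volume a b := by
  have hinv : Continuous fun t : ℝ => ((t : ℂ) - w)⁻¹ :=
    (continuous_ofReal.sub continuous_const).inv₀ (ofReal_sub_ne_zero_of_im_ne_zero hw)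
  exact (hinv.smul hg).intervalIntegrable a b

theorem tendsto_integral_inv_sub_smul_of_im_neg {w : ℂ} (hf : DiffContOnCl ℂ f ℍₒ)
    (hf₀ : Tendsto f (cobounded ℂ ⊓ 𝓟 ℍₒ) (𝓝 0)) (hw : w.im < 0) :
    Tendsto (fun R : ℝ => ∫ t in -R..R, (t - w)⁻¹ • f t) atTop (𝓝 0) :=
  tendsto_integral_real_zero ((diffContOnCl_inv_sub_const (by simpa using hw)).smul hf)
    (tendsto_smul_inv_sub_smul inf_le_left w hf₀)

theorem inv_sub_sub_inv_sub_conj_eq_cauchyPDFReal {z : ℂ} (hz : 0 < z.im) (t : ℝ) :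
    ((t : ℂ) - z)⁻¹ - (t - conj z)⁻¹
      = 2 * Real.pi * I * (cauchyPDFReal z.re z.im.toNNReal t : ℝ) := by
  have hsub : conj ((t : ℂ) - z) = t - conj z := by rw [map_sub, conj_ofReal]
  have hnormSq : normSq (t - z) = (t - z.re) ^ 2 + z.im ^ 2 := by
    simp [normSq_apply, sq]
  rw [← hsub, ← map_inv₀, sub_conj, inv_im, hnormSq, cauchyPDFReal_def, Real.coe_toNNReal _ hz.le]
  simp only [sub_im, ofReal_im, zero_sub, neg_neg]
  push_cast
  field_simp

theorem integrable_inv_sub_sub_inv_sub_conj {z : ℂ} (hz : 0 < z.im) :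
    Integrable fun t : ℝ => ((t : ℂ) - z)⁻¹ - (t - conj z)⁻¹ := by
  simp only [inv_sub_sub_inv_sub_conj_eq_cauchyPDFReal hz]
  exact (integrable_cauchyPDFReal z.re).ofReal.const_mul _

theorem integral_inv_sub_sub_inv_sub_conj {z : ℂ} (hz : 0 < z.im) :
    ∫ t : ℝ, (((t : ℂ) - z)⁻¹ - (t - conj z)⁻¹) = 2 * Real.pi * I := by
  have hscale : z.im.toNNReal ≠ 0 := (Real.toNNReal_pos.2 hz).ne'
  simp only [inv_sub_sub_inv_sub_conj_eq_cauchyPDFReal hz]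
  rw [integral_const_mul, integral_complex_ofReal, integral_cauchyPDFReal_eq_one z.re hscale,
    ofReal_one, mul_one]

theorem diffContOnCl_dslope [CompleteSpace E] {s : Set ℂ} {z : ℂ} (hf : DiffContOnCl ℂ f s)
    (hs : s ∈ 𝓝 z) : DiffContOnCl ℂ (dslope f z) s :=
  ⟨(differentiableOn_dslope hs).2 hf.differentiableOn,
    (continuousOn_dslope (mem_of_superset hs subset_closure)).2
      ⟨hf.continuousOn, hf.differentiableAt' hs⟩⟩

theorem tendsto_integral_inv_sub_smul_of_im_pos [CompleteSpace E] {z : ℂ} (hf : DiffContOnCl ℂ f ℍₒ)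
    (hf₀ : Tendsto f (cobounded ℂ ⊓ 𝓟 ℍₒ) (𝓝 0)) (hz : 0 < z.im) :
    Tendsto (fun R : ℝ => ∫ t in -R..R, ((t : ℂ) - z)⁻¹ • f t) atTop
      (𝓝 ((2 * Real.pi * I : ℂ) • f z)) := by
  have hconj : conj z ∉ closure ℍₒ := by simpa using hz
  set q : ℂ → E := fun ρ => dslope f z ρ + (ρ - conj z)⁻¹ • f z
  have hq : DiffContOnCl ℂ q ℍₒ :=
    (diffContOnCl_dslope hf (isOpen_upperHalfPlaneSet.mem_nhds hz)).add
      ((diffContOnCl_inv_sub_const hconj).smul_const (f z))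
  have hq₀ : Tendsto (fun ρ => ρ • q ρ) (cobounded ℂ ⊓ 𝓟 ℍₒ) (𝓝 0) := by
    simpa only [q, smul_add, zero_sub, neg_add_cancel] using
      (tendsto_smul_dslope inf_le_left z hf₀).add
        (tendsto_smul_inv_sub_smul inf_le_left (conj z) (tendsto_const_nhds (x := f z)))
  have hkernel := integrable_inv_sub_sub_inv_sub_conj hz
  have hlim := (tendsto_integral_real_zero hq hq₀).add
    ((intervalIntegral_tendsto_integral hkernel tendsto_neg_atTop_atBot tendsto_id).smul_const
      (f z))
  simp only [id, zero_add, integral_inv_sub_sub_inv_sub_conj hz] at hlim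
  refine hlim.congr fun R => ?_
  rw [← intervalIntegral.integral_smul_const, ← intervalIntegral.integral_add
    ((continuous_comp_ofReal hq.continuousOn).intervalIntegrable _ _)
    (hkernel.smul_const (f z)).intervalIntegrable]
  refine intervalIntegral.integral_congr fun t _ => ?_
  simp only [q, dslope_of_ne f (sub_ne_zero.1 (ofReal_sub_ne_zero_of_im_ne_zero hz.ne' t)),
    slope_def_module]
  module

end HalfPlane

theorem two_mul_div_sq_sub_sq {𝕜 : Type*} [Field 𝕜] {x y : 𝕜} (hsub : x - y ≠ 0)
    (hadd : x + y ≠ 0) : 2 * x / (x ^ 2 - y ^ 2) = (x - y)⁻¹ + (x + y)⁻¹ := by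
  rw [sq_sub_sq]
  field_simp
  ring

section Parabola

variable {h : ℝ}

theorem sq_mem_jGamma_iff (hh : h ≠ 0) (ρ : ℂ) : ρ ^ 2 ∈ JGamma h ↔ h ^ 2 < ρ.im ^ 2 := by
  have hdefect : (ρ ^ 2).im ^ 2 / (4 * h ^ 2) - h ^ 2 - (ρ ^ 2).re
      = (ρ.im ^ 2 - h ^ 2) * ((ρ.re ^ 2 + h ^ 2) / h ^ 2) := by
    simp only [sq ρ, mul_re, mul_im]
    field_simp
    ring
  rw [JGamma, mem_ofPred_eq, ← sub_pos, hdefect, mul_pos_iff_of_pos_right (by positivity), sub_pos]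

theorem mapsTo_add_I_mul_sq_jGamma (hh : 0 < h) :
    MapsTo (fun ρ : ℂ => (ρ + I * h) ^ 2) ℍₒ (JGamma h) := by
  intro ρ hρ
  rw [sq_mem_jGamma_iff hh.ne']
  gcongr
  simpa using hρ

theorem surjOn_add_I_mul_sq_jGamma (hh : 0 < h) :
    SurjOn (fun ρ : ℂ => (ρ + I * h) ^ 2) ℍₒ (JGamma h) := by
  intro lam hlam
  obtain ⟨z, rfl⟩ := IsAlgClosed.exists_pow_nat_eq lam two_pos
  have him : h < |z.im| := lt_of_pow_lt_pow_left₀ 2 (abs_nonneg _) <| by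
    rw [sq_abs]
    exact (sq_mem_jGamma_iff hh.ne' z).1 hlam
  rcases lt_abs.1 him with hz | hz
  · exact ⟨z - I * h, by simpa using hz, by simp⟩
  · exact ⟨-z - I * h, by simpa using hz, by simp⟩

theorem tendsto_add_I_mul_sq_cobounded (hh : 0 < h) :
    Tendsto (fun ρ : ℂ => (ρ + I * h) ^ 2) (cobounded ℂ ⊓ 𝓟 ℍₒ) (cobounded ℂ ⊓ 𝓟 (JGamma h)) :=
  ((tendsto_pow_cobounded_cobounded two_ne_zero).comp (tendsto_add_const_cobounded (I * h))).inf
    (tendsto_principal_principal.2 (mapsTo_add_I_mul_sq_jGamma hh))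

theorem closure_jGamma_subset_extGamma : closure (JGamma h) ⊆ ExtGamma h :=
  closure_minimal (fun lam (hlam : lam.re < _) => hlam.le) (isClosed_le (by fun_prop) (by fun_prop))

end Parabola

theorem cauchy_representation_on_parabolic_contour_general
    (h : ℝ) (F : ℂ → ℂ) (hh : 0 < h) (hF : DiffContOnCl ℂ F (JGamma h))
    (hdecay : Tendsto F (cobounded ℂ ⊓ 𝓟 (JGamma h)) (𝓝 0)) :
    ∀ lam ∈ JGamma h,
      PVGamma h (fun μ => F μ / (lam - μ)) (2 * (Real.pi : ℂ) * I * F lam) := by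
  intro lam hlam
  obtain ⟨z, hz : 0 < z.im, rfl⟩ := surjOn_add_I_mul_sq_jGamma hh hlam
  -- `w + ih = -(z + ih)` is the other square root of `lam`.
  set w : ℂ := -z - 2 * I * h
  have hw : w.im < 0 := by
    have him : w.im = -z.im - 2 * h := by simp [w]
    linarith
  set G : ℂ → ℂ := fun ρ => F ((ρ + I * h) ^ 2)
  have hG : DiffContOnCl ℂ G ℍₒ :=
    hF.comp (Differentiable.diffContOnCl (by fun_prop)) (mapsTo_add_I_mul_sq_jGamma hh)
  have hG₀ : Tendsto G (cobounded ℂ ⊓ 𝓟 ℍₒ) (𝓝 0) :=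
    hdecay.comp (tendsto_add_I_mul_sq_cobounded hh)
  have hlim := (tendsto_integral_inv_sub_smul_of_im_pos hG hG₀ hz).add
    (tendsto_integral_inv_sub_smul_of_im_neg hG hG₀ hw)
  rw [add_zero] at hlim
  refine hlim.congr fun R => ?_
  have hline : Continuous fun t : ℝ => G t := continuous_comp_ofReal hG.continuousOn
  rw [← intervalIntegral.integral_add (intervalIntegrable_inv_sub_smul hline hz.ne' _ _)
    (intervalIntegrable_inv_sub_smul hline hw.ne _ _)]
  refine intervalIntegral.integral_congr fun t _ => ?_
  have hsub : (t : ℂ) - z = (t + I * h) - (z + I * h) := by ring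
  have hadd : (t : ℂ) - w = (t + I * h) + (z + I * h) := by ring
  have hkernel := two_mul_div_sq_sub_sq (hsub ▸ ofReal_sub_ne_zero_of_im_ne_zero hz.ne' t)
    (hadd ▸ ofReal_sub_ne_zero_of_im_ne_zero hw.ne t)
  simp only [hsub, hadd, smul_eq_mul]
  rw [← add_mul, ← hkernel, ← neg_sub (_ ^ 2), div_neg]
  ring

/-- Cauchy integral representation on the parabolic contour: if `F` is
analytic on an open set containing `J_γ ∪ γ` and `F(λ) = O(|λ|⁻¹)` as `|λ| → ∞`, then
`F(λ) = (1/(2πi)) ∫_γ F(μ)/(λ − μ) dμ` for every `λ ∈ J_γ`, the integral being a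
principal value. -/
theorem cauchy_representation_on_parabolic_contour
    (h : ℝ) (F : ℂ → ℂ)
    (hh : 0 < h)
    (hF : ∃ U : Set ℂ, IsOpen U ∧ ExtGamma h ⊆ U ∧ DifferentiableOn ℂ F U)
    (hdecay : ∃ C R : ℝ, ∀ lam ∈ ExtGamma h, R ≤ ‖lam‖ → ‖F lam‖ ≤ C / ‖lam‖) :
    ∀ lam ∈ JGamma h,
      PVGamma h (fun μ => F μ / (lam - μ)) (2 * (Real.pi : ℂ) * Complex.I * F lam) := by
  obtain ⟨U, -, hExtU, hFU⟩ := hF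
  obtain ⟨C, R, hC⟩ := hdecay
  exact cauchy_representation_on_parabolic_contour_general h F hh
    (hFU.mono (closure_jGamma_subset_extGamma.trans hExtU)).diffContOnCl
    (tendsto_zero_of_norm_le_div_norm fun lam hlam =>
      hC lam (closure_jGamma_subset_extGamma (subset_closure hlam)))
end
end

section
/- Growth of order 1/2 of the series solutions: for j = 1,2 there exists a constant K > 0 such that for all x ≠ a and all ρ ∈ ℂ, |C_j(x,ρ²)| ≤ K |x−a|^{Re μ_j} e^{πν''} e^{K|ρ||x−a|} (where ν'' accounts for the branch factor in (x−a)^{μ_j}); in particular, for each fixed x ≠ a the map λ ↦ C_j(x,λ) is an entire function of λ of order at most 1/2. -/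
open Complex Set Filter MeasureTheory

noncomputable section

/-!
The denominator of the `k`-th coefficient is the product over `1 ≤ s ≤ k` of the values at `μ + 2s`
of a monic quadratic polynomial. These grow like `4s²` and none of them vanishes, so the coefficient
is `O((D ^ k / k!) ^ 2)` for some `D`. Since `t ^ k / k! ≤ exp t`, summing over `k` gives
`∑ (t ^ k / k!) ^ 2 ≤ exp (2 * t)`; with `t = D * r` this makes the power series entire and bounds
it by a multiple of `exp (2 * D * r)` on the disc of radius `r ^ 2`.
-/

section FactorialDecay

open Asymptotics

variable {p : ℕ}

theorem exists_norm_inv_prod_range_le {𝕜 : Type*} [NormedField 𝕜] {q : ℕ → 𝕜} (hp : p ≠ 0)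
    (hq : ∀ s, q s ≠ 0) (hO : (fun s : ℕ => ((s : ℝ) + 1) ^ p) =O[atTop] q) :
    ∃ D > (0 : ℝ), ∀ k : ℕ,
      ‖(∏ s ∈ Finset.range k, q s)⁻¹‖ ≤ (D ^ k / k.factorial) ^ p := by
  obtain ⟨M, -, hM⟩ := bound_of_isBigO_nat_atTop hO
  set D := max M 1
  have hMD : M ≤ D ^ p := (le_max_left M 1).trans (le_self_pow₀ (le_max_right M 1) hp)
  have hfactor (s : ℕ) : ‖(q s)⁻¹‖ ≤ (D / ((s : ℝ) + 1)) ^ p := by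
    have hs : ((s : ℝ) + 1) ^ p ≤ D ^ p * ‖q s‖ := calc
      ((s : ℝ) + 1) ^ p ≤ M * ‖q s‖ := (Real.le_norm_self _).trans (hM (hq s))
      _ ≤ D ^ p * ‖q s‖ := by gcongr
    rw [norm_inv, div_pow, inv_le_comm₀ (norm_pos_iff.mpr (hq s)) (by positivity), inv_div]
    exact div_le_of_le_mul₀ (by positivity) (norm_nonneg _) (by rwa [mul_comm])
  refine ⟨D, by positivity, fun k => ?_⟩
  calc ‖(∏ s ∈ Finset.range k, q s)⁻¹‖ = ∏ s ∈ Finset.range k, ‖(q s)⁻¹‖ := by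
        rw [← Finset.prod_inv_distrib, norm_prod]
    _ ≤ ∏ s ∈ Finset.range k, (D / ((s : ℝ) + 1)) ^ p :=
        Finset.prod_le_prod (fun _ _ => norm_nonneg _) fun s _ => hfactor s
    _ = (D ^ k / k.factorial) ^ p := by
        rw [Finset.prod_pow, Finset.prod_div_distrib, Finset.prod_const, Finset.card_range,
          ← Finset.prod_range_add_one_eq_factorial]
        push_cast
        rfl

theorem pow_div_factorial_pow_le {t : ℝ} (ht : 0 ≤ t) (hp : p ≠ 0) (k : ℕ) :
    (t ^ k / k.factorial) ^ p ≤ Real.exp ((p - 1) * t) * (t ^ k / k.factorial) := by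
  obtain ⟨n, rfl⟩ := Nat.exists_eq_succ_of_ne_zero hp
  have hn : ((n.succ : ℝ) - 1) * t = n * t := by push_cast; ring
  rw [pow_succ, hn, Real.exp_nat_mul]
  gcongr
  exact Real.pow_div_factorial_le_exp t ht k

theorem summable_pow_div_factorial_pow {t : ℝ} (ht : 0 ≤ t) (hp : p ≠ 0) :
    Summable fun k : ℕ => (t ^ k / k.factorial) ^ p :=
  .of_nonneg_of_le (fun _ => by positivity) (pow_div_factorial_pow_le ht hp)
    ((Real.summable_pow_div_factorial t).mul_left _)

theorem tsum_pow_div_factorial_pow_le {t : ℝ} (ht : 0 ≤ t) (hp : p ≠ 0) :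
    ∑' k : ℕ, (t ^ k / k.factorial) ^ p ≤ Real.exp (p * t) := calc
  ∑' k : ℕ, (t ^ k / k.factorial) ^ p
      ≤ ∑' k : ℕ, Real.exp ((p - 1) * t) * (t ^ k / k.factorial) :=
        (summable_pow_div_factorial_pow ht hp).tsum_le_tsum (pow_div_factorial_pow_le ht hp)
          ((Real.summable_pow_div_factorial t).mul_left _)
  _ = Real.exp ((p - 1) * t) * Real.exp t := by
        rw [tsum_mul_left, Real.exp_eq_exp_ℝ, NormedSpace.exp_eq_tsum_div]
  _ = Real.exp (p * t) := by rw [← Real.exp_add]; ring_nf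

section PowerSeries

variable {𝕜 : Type*} [NormedField 𝕜] {A D r : ℝ}

theorem norm_mul_pow_le_of_factorial_decay {c : ℕ → 𝕜}
    (hc : ∀ k, ‖c k‖ ≤ A * (D ^ k / k.factorial) ^ p) {w : 𝕜} (hw : ‖w‖ ≤ r ^ p) (k : ℕ) :
    ‖c k * w ^ k‖ ≤ A * ((D * r) ^ k / k.factorial) ^ p := calc
  ‖c k * w ^ k‖ = ‖c k‖ * ‖w‖ ^ k := by rw [norm_mul, norm_pow]
  _ ≤ A * (D ^ k / k.factorial) ^ p * (r ^ p) ^ k := by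
        gcongr
        exacts [(norm_nonneg _).trans (hc k), hc k]
  _ = A * ((D * r) ^ k / k.factorial) ^ p := by ring

theorem norm_tsum_mul_pow_le_of_factorial_decay {c : ℕ → 𝕜} (hp : p ≠ 0) (hD : 0 ≤ D)
    (hc : ∀ k, ‖c k‖ ≤ A * (D ^ k / k.factorial) ^ p) (hr : 0 ≤ r) {w : 𝕜} (hw : ‖w‖ ≤ r ^ p) :
    ‖∑' k : ℕ, c k * w ^ k‖ ≤ A * Real.exp (p * (D * r)) := by
  have hDr : 0 ≤ D * r := mul_nonneg hD hr
  have hA : 0 ≤ A := (norm_nonneg (c 0)).trans (by simpa using hc 0)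
  calc ‖∑' k : ℕ, c k * w ^ k‖ ≤ A * ∑' k : ℕ, ((D * r) ^ k / k.factorial) ^ p :=
        tsum_of_norm_bounded ((summable_pow_div_factorial_pow hDr hp).hasSum.mul_left A)
          (norm_mul_pow_le_of_factorial_decay hc hw)
    _ ≤ A * Real.exp (p * (D * r)) := by
        gcongr
        exact tsum_pow_div_factorial_pow_le hDr hp

theorem differentiable_tsum_mul_pow_of_factorial_decay {c : ℕ → ℂ} (hp : p ≠ 0) (hD : 0 ≤ D)
    (hc : ∀ k, ‖c k‖ ≤ A * (D ^ k / k.factorial) ^ p) :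
    Differentiable ℂ fun w : ℂ => ∑' k : ℕ, c k * w ^ k := by
  intro w
  set R := ‖w‖ + 1
  have hR : R ≤ R ^ p := le_self_pow₀ (le_add_of_nonneg_left (norm_nonneg w)) hp
  have hbound (k : ℕ) (z : ℂ) (hz : z ∈ Metric.ball 0 R) :
      ‖c k * z ^ k‖ ≤ A * ((D * R) ^ k / k.factorial) ^ p :=
    norm_mul_pow_le_of_factorial_decay hc ((mem_ball_zero_iff.mp hz).le.trans hR) k
  have hDR : 0 ≤ D * R := by positivity
  have hsum := (summable_pow_div_factorial_pow hDR hp).mul_left A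
  exact (differentiableOn_tsum_of_summable_norm hsum (fun k => by fun_prop) Metric.isOpen_ball
    hbound).differentiableAt (Metric.isOpen_ball.mem_nhds (by simp [R]))

end PowerSeries

end FactorialDecay

/-- The indicial polynomial `r(r - 1) - ν₀` of the Bessel-type operator
`y'' - ν₀ (x - a)⁻² y`, whose Frobenius exponents are its roots. The coefficients `coefC ν₀ μ c0`
have its values at `μ + 2`, `μ + 4`, … as denominators. -/
def indicial (ν₀ r : ℂ) : ℂ :=
  r * (r - 1) - ν₀

section Indicial

open Asymptotics Bornology

theorem indicial_isEquivalent_sq (ν₀ : ℂ) : indicial ν₀ ~[cobounded ℂ] fun r => r ^ 2 := by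
  have hlin : (fun r : ℂ => r) =o[cobounded ℂ] fun r => r ^ 2 := by
    simpa using isLittleO_pow_pow_cobounded_of_lt (R := ℂ) one_lt_two
  have hconst : (fun _ : ℂ => ν₀) =o[cobounded ℂ] fun r => r ^ 2 :=
    (isLittleO_const_id_cobounded ν₀).trans hlin
  refine (hlin.add hconst).neg_left.congr_left fun r => ?_
  simp only [indicial, Pi.sub_apply]
  ring

theorem isBigO_indicial_two_mul_add (ν₀ μ : ℂ) :
    (fun s : ℕ => ((s : ℝ) + 1) ^ 2) =O[atTop]
      fun s : ℕ => indicial ν₀ (2 * ((s : ℂ) + 1) + μ) := by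
  have hr : Tendsto (fun s : ℕ => 2 * ((s : ℂ) + 1) + μ) atTop (cobounded ℂ) :=
    (tendsto_add_const_cobounded μ).comp <| (tendsto_mul_left_cobounded two_ne_zero).comp <|
      (tendsto_add_const_cobounded 1).comp tendsto_natCast_atTop_cobounded
  have hinv : (fun r : ℂ => 2⁻¹ * (r - μ)) =O[cobounded ℂ] fun r => r :=
    ((isBigO_refl _ _).sub (isLittleO_const_id_cobounded μ).isBigO).const_mul_left 2⁻¹
  have hlin : (fun s : ℕ => (s : ℝ) + 1) =O[atTop] fun s : ℕ => 2 * ((s : ℂ) + 1) + μ := by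
    refine (hinv.comp_tendsto hr).norm_left.congr_left fun s => ?_
    simpa using norm_natCast (s + 1)
  exact (hlin.pow 2).trans ((indicial_isEquivalent_sq ν₀).isBigO_symm.comp_tendsto hr)

theorem indicial_sq_sub_ne_zero {ν : ℂ} (hν : ∀ n : ℕ, 0 < n → ν ≠ -n) (s : ℕ) :
    indicial (ν ^ 2 - 1 / 4) (2 * ((s : ℂ) + 1) + (ν + 1 / 2)) ≠ 0 := by
  have hfactor : indicial (ν ^ 2 - 1 / 4) (2 * ((s : ℂ) + 1) + (ν + 1 / 2)) =
      4 * ((s + 1 : ℕ) * (ν + (s + 1 : ℕ))) := by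
    push_cast [indicial]
    ring
  rw [hfactor]
  exact mul_ne_zero (OfNat.ofNat_ne_zero 4)
    (mul_ne_zero (Nat.cast_ne_zero.mpr s.succ_ne_zero)
      (mt eq_neg_of_add_eq_zero_left (hν (s + 1) s.succ_pos)))

end Indicial

theorem norm_cpow_le_rpow_mul_exp_pi (z μ : ℂ) :
    ‖z ^ μ‖ ≤ ‖z‖ ^ μ.re * Real.exp (Real.pi * |μ.im|) := by
  have harg : -(arg z * μ.im) ≤ Real.pi * |μ.im| := calc
    -(arg z * μ.im) ≤ |arg z| * |μ.im| := (neg_le_abs _).trans_eq (abs_mul _ _)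
    _ ≤ Real.pi * |μ.im| := by gcongr; exact abs_arg_le_pi z
  calc ‖z ^ μ‖ ≤ ‖z‖ ^ μ.re * Real.exp (-(arg z * μ.im)) := by
        simpa only [div_eq_mul_inv, ← Real.exp_neg] using norm_cpow_le z μ
    _ ≤ ‖z‖ ^ μ.re * Real.exp (Real.pi * |μ.im|) := by gcongr

theorem exists_norm_le_exp_rpow_of_norm_comp_pow_le {𝕜 E : Type*} [NormedField 𝕜] [IsAlgClosed 𝕜]
    [SeminormedAddCommGroup E] {f : 𝕜 → E} {n : ℕ} (hn : n ≠ 0) {L M : ℝ}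
    (hf : ∀ ρ : 𝕜, ‖f (ρ ^ n)‖ ≤ L * Real.exp (M * ‖ρ‖)) :
    ∃ B > (0 : ℝ), ∀ z : 𝕜, ‖f z‖ ≤ B * Real.exp (B * ‖z‖ ^ (n : ℝ)⁻¹) := by
  refine ⟨max 1 (max L M), by positivity, fun z => ?_⟩
  obtain ⟨ρ, rfl⟩ := IsAlgClosed.exists_pow_nat_eq z hn.pos
  rw [norm_pow, Real.pow_rpow_inv_natCast (norm_nonneg ρ) hn]
  refine (hf ρ).trans ?_
  gcongr <;> simp

section SeriesSolutions

variable {ν₀ μ : ℂ}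

theorem exists_norm_coefC_le (c0 : ℂ)
    (hμ : ∀ s : ℕ, indicial ν₀ (2 * ((s : ℂ) + 1) + μ) ≠ 0) :
    ∃ D > (0 : ℝ), ∀ k, ‖coefC ν₀ μ c0 k‖ ≤ ‖c0‖ * (D ^ k / k.factorial) ^ 2 := by
  obtain ⟨D, hD, hprod⟩ :=
    exists_norm_inv_prod_range_le two_ne_zero hμ (isBigO_indicial_two_mul_add ν₀ μ)
  refine ⟨D, hD, fun k => ?_⟩
  calc ‖coefC ν₀ μ c0 k‖
      = ‖c0‖ * ‖(∏ s ∈ Finset.range k, indicial ν₀ (2 * ((s : ℂ) + 1) + μ))⁻¹‖ := by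
        simp [coefC, indicial, div_eq_mul_inv]
    _ ≤ ‖c0‖ * (D ^ k / k.factorial) ^ 2 := by
        gcongr
        exact hprod k

theorem differentiable_Cfun (a : ℝ) (c0 : ℂ)
    (hμ : ∀ s : ℕ, indicial ν₀ (2 * ((s : ℂ) + 1) + μ) ≠ 0) (x : ℝ) :
    Differentiable ℂ (Cfun a ν₀ μ c0 x) := by
  obtain ⟨D, hD, hcoef⟩ := exists_norm_coefC_le c0 hμ
  exact ((differentiable_tsum_mul_pow_of_factorial_decay two_ne_zero hD.le hcoef).comp
    (differentiable_id.mul_const _)).const_mul _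

theorem exists_norm_Cfun_sq_le (a : ℝ) (c0 : ℂ)
    (hμ : ∀ s : ℕ, indicial ν₀ (2 * ((s : ℂ) + 1) + μ) ≠ 0) :
    ∃ K > (0 : ℝ), ∀ (x : ℝ) (ρ : ℂ), ‖Cfun a ν₀ μ c0 x (ρ ^ 2)‖ ≤
      K * |x - a| ^ μ.re * Real.exp (Real.pi * |μ.im|) * Real.exp (K * ‖ρ‖ * |x - a|) := by
  obtain ⟨D, hD, hcoef⟩ := exists_norm_coefC_le c0 hμ
  set K := max ‖c0‖ (2 * D)
  refine ⟨K, lt_max_of_lt_right (by positivity), fun x ρ => ?_⟩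
  have hnorm : ‖(x : ℂ) - a‖ = |x - a| := by
    rw [← ofReal_sub, norm_real, Real.norm_eq_abs]
  have hbranch : ‖((x : ℂ) - a) ^ μ‖ ≤ |x - a| ^ μ.re * Real.exp (Real.pi * |μ.im|) :=
    hnorm ▸ norm_cpow_le_rpow_mul_exp_pi _ μ
  have harg : ‖ρ ^ 2 * ((x : ℂ) - a) ^ 2‖ ≤ (‖ρ‖ * |x - a|) ^ 2 := by
    rw [← mul_pow, norm_pow, norm_mul, hnorm]
  have hseries : ‖∑' k, coefC ν₀ μ c0 k * (ρ ^ 2 * ((x : ℂ) - a) ^ 2) ^ k‖ ≤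
      K * Real.exp (K * ‖ρ‖ * |x - a|) := calc
    _ ≤ ‖c0‖ * Real.exp ((2 : ℕ) * (D * (‖ρ‖ * |x - a|))) :=
        norm_tsum_mul_pow_le_of_factorial_decay two_ne_zero hD.le hcoef (by positivity) harg
    _ = ‖c0‖ * Real.exp (2 * D * ‖ρ‖ * |x - a|) := by push_cast; ring_nf
    _ ≤ K * Real.exp (K * ‖ρ‖ * |x - a|) := by
        gcongr
        exacts [le_max_left _ _, le_max_right _ _]
  calc ‖Cfun a ν₀ μ c0 x (ρ ^ 2)‖
      ≤ |x - a| ^ μ.re * Real.exp (Real.pi * |μ.im|) * (K * Real.exp (K * ‖ρ‖ * |x - a|)) := by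
        rw [Cfun, norm_mul]
        gcongr
    _ = _ := by ring

end SeriesSolutions

theorem series_solutions_order_one_half_general (a : ℝ) {ν₀ μ : ℂ} (c0 : ℂ)
    (hμ : ∀ s : ℕ, indicial ν₀ (2 * ((s : ℂ) + 1) + μ) ≠ 0) :
    (∃ K > (0 : ℝ), ∀ x : ℝ, x ≠ a → ∀ ρ : ℂ, ‖Cfun a ν₀ μ c0 x (ρ ^ 2)‖ ≤
      K * |x - a| ^ μ.re * Real.exp (Real.pi * |μ.im|) * Real.exp (K * ‖ρ‖ * |x - a|)) ∧
    ∀ x : ℝ, x ≠ a →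
      Differentiable ℂ (fun lam => Cfun a ν₀ μ c0 x lam) ∧
      ∃ B > (0 : ℝ), ∀ lam : ℂ,
        ‖Cfun a ν₀ μ c0 x lam‖ ≤ B * Real.exp (B * ‖lam‖ ^ (1 / 2 : ℝ)) := by
  obtain ⟨K, hK, hbound⟩ := exists_norm_Cfun_sq_le a c0 hμ
  refine ⟨⟨K, hK, fun x _ => hbound x⟩, fun x _ => ⟨differentiable_Cfun a c0 hμ x, ?_⟩⟩
  have hgrowth (ρ : ℂ) : ‖Cfun a ν₀ μ c0 x (ρ ^ 2)‖ ≤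
      K * |x - a| ^ μ.re * Real.exp (Real.pi * |μ.im|) * Real.exp (K * |x - a| * ‖ρ‖) := by
    simpa only [mul_right_comm K ‖ρ‖] using hbound x ρ
  simpa using exists_norm_le_exp_rpow_of_norm_comp_pow_le two_ne_zero hgrowth

/-- growth of order `1/2` of the series solutions: for `j = 1,2` there is
`K > 0` with `|C_j(x,ρ²)| ≤ K |x−a|^{Re μ_j} e^{πν''} e^{K|ρ||x−a|}` for all `x ≠ a`
and all `ρ ∈ ℂ` (here `ν'' = |Im ν|` accounts for the branch factor in `(x−a)^{μ_j}`);
in particular, for each fixed `x ≠ a` the map `λ ↦ C_j(x,λ)` is an entire function of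
`λ` of order at most `1/2`. -/
theorem series_solutions_order_one_half
    (a : ℝ) (ν ν₀ c10 c20 : ℂ)
    (ha : 0 < a)
    (hν : 0 < ν.re) (hνint : ∀ n : ℕ, 0 < n → ν ≠ (n : ℂ)) (hν₀ : ν₀ = ν ^ 2 - 1 / 4)
    (hc : c10 * c20 = 1 / (2 * ν)) (hc10 : c10 ≠ 0) (hc20 : c20 ≠ 0) :
    ∀ j : ℕ, j = 1 ∨ j = 2 →
      (∃ K > (0 : ℝ), ∀ x : ℝ, x ≠ a → ∀ ρ : ℂ,
        ‖Cfun a ν₀ (if j = 1 then -ν + 1 / 2 else ν + 1 / 2)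
            (if j = 1 then c10 else c20) x (ρ ^ 2)‖ ≤
          K * |x - a| ^ ((if j = 1 then -ν + 1 / 2 else ν + 1 / 2 : ℂ)).re *
            Real.exp (Real.pi * |ν.im|) * Real.exp (K * ‖ρ‖ * |x - a|)) ∧
      (∀ x : ℝ, x ≠ a →
        Differentiable ℂ (fun lam => Cfun a ν₀ (if j = 1 then -ν + 1 / 2 else ν + 1 / 2)
            (if j = 1 then c10 else c20) x lam) ∧
        ∃ B > (0 : ℝ), ∀ lam : ℂ,
          ‖Cfun a ν₀ (if j = 1 then -ν + 1 / 2 else ν + 1 / 2)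
              (if j = 1 then c10 else c20) x lam‖ ≤
            B * Real.exp (B * ‖lam‖ ^ (1 / 2 : ℝ))) := by
  subst hν₀
  have hneg : ∀ s : ℕ, indicial (ν ^ 2 - 1 / 4) (2 * ((s : ℂ) + 1) + (-ν + 1 / 2)) ≠ 0 :=
    neg_sq ν ▸ indicial_sq_sub_ne_zero fun n hn => neg_injective.ne (hνint n hn)
  have hpos : ∀ s : ℕ, indicial (ν ^ 2 - 1 / 4) (2 * ((s : ℂ) + 1) + (ν + 1 / 2)) ≠ 0 :=
    indicial_sq_sub_ne_zero fun n _ h => hν.not_ge (by simp [h])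
  rintro j (rfl | rfl)
  · simpa using series_solutions_order_one_half_general a c10 hneg
  · simpa using series_solutions_order_one_half_general a c20 hpos
end
end
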